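/- arXiv:0712.4336 — 2 statements merged into one kernel-verified Lean document; each statement's English description precedes it below -/
import Mathlib

section
/- Let A be a commutative ring, α a type, and f : {finite subsets of α} → A with f(∅) = 0. Define the ∗-product of two such functions by (f ∗ h)(Y) := ∑_{Z ⊆ Y} f(Z) h(Y∖Z), the sum over all subsets Z of Y (including ∅ and Y). Then for every n ≥ 1 and every finite set Y, the n-fold ∗-power satisfies f^{∗n}(Y) = n! · ∑_{P partition of Y with |P| = n} ∏_{X ∈ P} f(X); in particular f^{∗n}(Y) = 0 if |Y| < n. -/
/-- The `∗`-product `(f ∗ h)(Y) = ∑_{Z ⊆ Y} f(Z) h(Y∖Z)` on functions from finite subsets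
of `α` to a commutative ring `A` (the sum runs over all subsets `Z` of `Y`, including `∅`
and `Y` itself). -/
def starConv {α : Type*} [DecidableEq α] {A : Type*} [CommRing A]
    (f h : Finset α → A) (Y : Finset α) : A :=
  ∑ Z ∈ Y.powerset, f Z * h (Y \ Z)

/-- The `n`-fold `∗`-power `f^{∗n}`; the `0`-th power is the unit of the `∗`-product. -/
def starPow {α : Type*} [DecidableEq α] {A : Type*} [CommRing A]
    (f : Finset α → A) : ℕ → Finset α → A
  | 0 => fun Y => if Y = ∅ then 1 else 0
  | n + 1 => starConv f (starPow f n)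

/-! Pointing a partition of `Y` at one of its blocks `X` is the same as choosing a nonempty
`X ⊆ Y` together with a partition of `Y \ X`. Since a partition into `n + 1` blocks can be pointed
in `n + 1` ways, each further `∗`-factor `f` contributes one more factor to `n!`. -/

open Finset
open scoped Nat

theorem notMem_parts_of_disjoint {α : Type*} [Lattice α] [OrderBot α] {a b : α}
    (P : Finpartition a) (hb : b ≠ ⊥) (hab : Disjoint a b) : b ∉ P.parts :=
  fun h => hb (hab.symm.eq_bot_of_le (P.le h))

section EraseBlock

variable {α : Type*} [GeneralizedBooleanAlgebra α] [DecidableEq α] {a b : α}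

theorem sup_parts_erase_eq_sdiff (P : Finpartition a) (hb : b ∈ P.parts) :
    (P.parts.erase b).sup id = a \ b := by
  have hdisj : Disjoint b ((P.parts.erase b).sup id) :=
    P.supIndep (erase_subset b P.parts) hb (notMem_erase b P.parts)
  have hsup : b ⊔ (P.parts.erase b).sup id = a :=
    calc
      b ⊔ (P.parts.erase b).sup id = (insert b (P.parts.erase b)).sup id := by
        rw [sup_insert, id_eq]
      _ = a := by rw [insert_erase hb, P.sup_parts]
  exact hdisj.sup_sdiff_cancel_left.symm.trans (congrArg (· \ b) hsup)

/-- The finite partition of `a \ b` left after removing the block `b` from a finite partition of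
`a`. It undoes `Finpartition.extend`. -/
def eraseBlock (P : Finpartition a) (hb : b ∈ P.parts) : Finpartition (a \ b) :=
  P.ofSubset (erase_subset b P.parts) (sup_parts_erase_eq_sdiff P hb)

end EraseBlock

section PartitionSum

variable {α : Type*} [DecidableEq α]

theorem sum_finpartition_sdiff_eq_sum_erase {M : Type*} [AddCommMonoid M]
    (F : Finset α → Finset (Finset α) → M) (Y : Finset α) :
    ∑ X ∈ Y.powerset.erase ∅, ∑ Q : Finpartition (Y \ X), F X Q.parts =
      ∑ P : Finpartition Y, ∑ X ∈ P.parts, F X (P.parts.erase X) := by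
  have nonempty_subset {X : Finset α} {Q : Finpartition (Y \ X)}
      (h : ⟨X, Q⟩ ∈ (Y.powerset.erase ∅).sigma fun X => (univ : Finset (Finpartition (Y \ X)))) :
      X ≠ ∅ ∧ X ⊆ Y := by
    simpa using h
  have erase_insert_self {X : Finset α} {Q : Finpartition (Y \ X)} (hX : X ≠ ∅) :
      (insert X Q.parts).erase X = Q.parts :=
    erase_insert (notMem_parts_of_disjoint Q hX disjoint_sdiff_self_left)
  rw [sum_sigma', sum_sigma']
  refine sum_bij'
    (fun p hp => ⟨p.2.extend (nonempty_subset hp).1 disjoint_sdiff_self_left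
      (sdiff_sup_cancel (nonempty_subset hp).2), p.1⟩)
    (fun p hp => ⟨p.2, eraseBlock p.1 (mem_sigma.1 hp).2⟩) ?_ ?_ ?_ ?_ ?_
  · rintro ⟨X, Q⟩ _
    simp
  · rintro ⟨P, X⟩ hX
    have hX : X ∈ P.parts := (mem_sigma.1 hX).2
    simpa using ⟨P.ne_empty hX, P.subset hX⟩
  · rintro ⟨X, Q⟩ hX
    exact Sigma.ext rfl <| heq_of_eq <| Finpartition.ext <|
      erase_insert_self (nonempty_subset hX).1
  · rintro ⟨P, X⟩ hX
    exact Sigma.ext (Finpartition.ext (insert_erase (mem_sigma.1 hX).2)) HEq.rfl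
  · rintro ⟨X, Q⟩ hX
    exact congrArg (F X) (erase_insert_self (nonempty_subset hX).1).symm

variable {R : Type*} [CommSemiring R]

/-- The sum, over the partitions of `Y` into `n` blocks, of the products of the values of `f` on
the blocks; when `f ∅ = 0`, it plays the role of `f^{∗n} / n!`. -/
def partitionSum (f : Finset α → R) (n : ℕ) (Y : Finset α) : R :=
  ∑ P : Finpartition Y with #P.parts = n, ∏ X ∈ P.parts, f X

theorem partitionSum_zero (f : Finset α → R) (Y : Finset α) :
    partitionSum f 0 Y = if Y = ∅ then 1 else 0 := by
  obtain rfl | hY := eq_or_ne Y ∅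
  · have : Unique (Finpartition (∅ : Finset α)) :=
      inferInstanceAs (Unique (Finpartition (⊥ : Finset α)))
    have parts_eq_empty (P : Finpartition (∅ : Finset α)) : P.parts = ∅ :=
      P.parts_eq_empty_iff.2 rfl
    simp [partitionSum, parts_eq_empty]
  · rw [partitionSum, if_neg hY, filter_false_of_mem, sum_empty]
    exact fun P _ => (card_pos.2 (P.parts_nonempty hY)).ne'

theorem partitionSum_eq_zero_of_card_lt (f : Finset α → R) {n : ℕ} {Y : Finset α} (h : #Y < n) :
    partitionSum f n Y = 0 := by
  rw [partitionSum, filter_false_of_mem, sum_empty]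
  exact fun P _ => (P.card_parts_le_card.trans_lt h).ne

theorem sum_mul_partitionSum_sdiff (f : Finset α → R) (n : ℕ) (Y : Finset α) :
    ∑ X ∈ Y.powerset.erase ∅, f X * partitionSum f n (Y \ X) =
      (n + 1) * partitionSum f (n + 1) Y := by
  have erase_term (P : Finpartition Y) {X : Finset α} (hX : X ∈ P.parts) :
      (if #(P.parts.erase X) = n then f X * ∏ Z ∈ P.parts.erase X, f Z else 0) =
        if #P.parts = n + 1 then ∏ Z ∈ P.parts, f Z else 0 := by
    rw [mul_prod_erase _ _ hX, ← card_erase_add_one hX]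
    simp only [add_left_inj]
  calc
    _ = ∑ X ∈ Y.powerset.erase ∅, ∑ Q : Finpartition (Y \ X),
          if #Q.parts = n then f X * ∏ Z ∈ Q.parts, f Z else 0 := by
      simp only [partitionSum, sum_filter, mul_sum, mul_ite, mul_zero]
    _ = ∑ P : Finpartition Y, ∑ X ∈ P.parts,
          if #(P.parts.erase X) = n then f X * ∏ Z ∈ P.parts.erase X, f Z else 0 :=
      sum_finpartition_sdiff_eq_sum_erase
        (fun X q => if #q = n then f X * ∏ Z ∈ q, f Z else 0) Y
    _ = ∑ P : Finpartition Y, ∑ _X ∈ P.parts,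
          if #P.parts = n + 1 then ∏ Z ∈ P.parts, f Z else 0 :=
      sum_congr rfl fun P _ => sum_congr rfl fun _ hX => erase_term P hX
    _ = ∑ P : Finpartition Y with #P.parts = n + 1, #P.parts * ∏ Z ∈ P.parts, f Z := by
      simp only [sum_const, nsmul_eq_mul, mul_ite, mul_zero, sum_filter]
    _ = (n + 1) * partitionSum f (n + 1) Y := by
      rw [partitionSum, mul_sum]
      refine sum_congr rfl fun P hP => ?_
      rw [(mem_filter.1 hP).2, Nat.cast_succ]

end PartitionSum

section StarConv

variable {α : Type*} [DecidableEq α] {A : Type*} [CommRing A]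

theorem starConv_const_mul (f h : Finset α → A) (c : A) (Y : Finset α) :
    starConv f (fun Z => c * h Z) Y = c * starConv f h Y := by
  simp only [starConv, mul_sum, mul_left_comm]

theorem starConv_partitionSum {f : Finset α → A} (hf : f ∅ = 0) (n : ℕ) (Y : Finset α) :
    starConv f (partitionSum f n) Y = (n + 1) * partitionSum f (n + 1) Y := by
  rw [← sum_mul_partitionSum_sdiff, starConv, sum_erase _ (by rw [hf, zero_mul])]

end StarConv

/-- **Key step in the proof of Lemma 1 of the paper.** If `f(∅) = 0`, then for every
`n ≥ 1` and every finite `Y`, `f^{∗n}(Y) = n! ∑_{P partition of Y, |P| = n} ∏_{X ∈ P} f(X)`;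
in particular `f^{∗n}(Y) = 0` whenever `|Y| < n`. -/
theorem starPow_eq_factorial_mul_sum_partitions {α : Type*} [DecidableEq α]
    {A : Type*} [CommRing A] (f : Finset α → A) (hf : f ∅ = 0) (n : ℕ) (hn : 1 ≤ n)
    (Y : Finset α) :
    (starPow f n Y =
        (Nat.factorial n : A) *
          ∑ P ∈ Finset.univ.filter (fun P : Finpartition Y => P.parts.card = n),
            ∏ X ∈ P.parts, f X) ∧
      (Y.card < n → starPow f n Y = 0) := by
  have starPow_eq (m : ℕ) (Z : Finset α) : starPow f m Z = m ! * partitionSum f m Z := by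
    induction m generalizing Z with
    | zero => rw [starPow, partitionSum_zero, Nat.factorial_zero, Nat.cast_one, one_mul]
    | succ m ih =>
      rw [starPow, funext ih, starConv_const_mul, starConv_partitionSum hf, Nat.factorial_succ]
      push_cast
      ring
  refine ⟨starPow_eq n Y, fun hY => ?_⟩
  rw [starPow_eq, partitionSum_eq_zero_of_card_lt f hY, mul_zero]
end

section
/- Let M be an additive commutative group (e.g. the additive group of a ring), Y a finite set with |Y| ≥ 2, and M(Z) ∈ M given for every nonempty subset Z ⊆ Y. Then ∑_{P partition of Y} (−1)^{|P|−1}(|P|−1)! ∑_{X ∈ P} ∑_{∅ ≠ Z ⊆ X} M(Z) = M(Y). -/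
/-!
After exchanging the sums, `M Z` is weighted by the sum of the cumulant coefficients of those
partitions of `Y` that have a block containing `Z`. For `Z = Y` only the one-block partition
contributes, with coefficient `1`. For `Z ≠ Y` pick `y ∈ Y \ Z` and group the partitions of `Y`
by their restriction `Q` to `Y \ {y}`. If `Q` has `k` blocks, then `y` either forms a block of its
own or joins one of these `k` blocks, so the group of `Q` contributes
`(-1) ^ k * k! + k * ((-1) ^ (k - 1) * (k - 1)!) = 0`.
-/

open Finset

/-- The coefficient `(-1) ^ (n - 1) * (n - 1)!` of a partition into `n` blocks in the expansion of
a cumulant. Because of the truncated subtraction, the value at `n = 0` is `1`. -/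
def cumulantCoeff (n : ℕ) : ℤ :=
  (-1) ^ (n - 1) * (Nat.factorial (n - 1) : ℤ)

theorem cumulantCoeff_succ_add_mul {n : ℕ} (hn : n ≠ 0) :
    cumulantCoeff (n + 1) + n * cumulantCoeff n = 0 := by
  obtain ⟨k, rfl⟩ := Nat.exists_eq_succ_of_ne_zero hn
  simp only [cumulantCoeff, Nat.succ_eq_add_one, Nat.add_sub_cancel, Nat.factorial_succ, pow_succ]
  push_cast
  ring

theorem exists_le_parts_restrict_iff {L : Type*} [DistribLattice L] [OrderBot L] [DecidableEq L]
    {a b z : L} (P : Finpartition a) (hb : b ≤ a) (hz : z ≠ ⊥) (hzb : z ≤ b) :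
    (∃ x ∈ (P.restrict hb).parts, z ≤ x) ↔ ∃ x ∈ P.parts, z ≤ x := by
  simp only [Finpartition.restrict, mem_erase, mem_image]
  constructor
  · rintro ⟨_, ⟨-, x, hx, rfl⟩, hzx⟩
    exact ⟨x, hx, hzx.trans inf_le_left⟩
  · rintro ⟨x, hx, hzx⟩
    have hz_inf : z ≤ x ⊓ b := le_inf hzx hzb
    exact ⟨x ⊓ b, ⟨ne_bot_of_le_ne_bot hz hz_inf, x, hx, rfl⟩, hz_inf⟩

theorem exists_ge_parts_iff_eq_indiscrete {L : Type*} [Lattice L] [OrderBot L] {a : L}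
    (ha : a ≠ ⊥) (P : Finpartition a) :
    (∃ x ∈ P.parts, a ≤ x) ↔ P = Finpartition.indiscrete ha := by
  constructor
  · intro h
    apply le_antisymm
    · exact fun x hx ↦ ⟨a, mem_singleton_self a, P.le hx⟩
    · rintro x hx
      rwa [mem_singleton.1 hx]
  · rintro rfl
    exact ⟨a, mem_singleton_self a, le_rfl⟩

section AdjoinPoint

variable {α : Type*} [DecidableEq α] {S B : Finset α} {y : α}

theorem subset_of_mem_insert_empty_parts {Q : Finpartition S} (hB : B ∈ insert ∅ Q.parts) :
    B ⊆ S := by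
  rcases mem_insert.1 hB with rfl | hB
  exacts [empty_subset S, Q.subset hB]

theorem parts_avoid_of_mem_insert_empty {Q : Finpartition S} (hB : B ∈ insert ∅ Q.parts) :
    (Q.avoid B).parts = Q.parts.erase B := by
  have h_sdiff : ∀ X ∈ Q.parts, X ≠ B → X \ B = X := fun X hX hXB ↦ by
    rcases mem_insert.1 hB with rfl | hB
    · exact sdiff_empty
    · exact sdiff_eq_self_of_disjoint (Q.disjoint hX hB hXB)
  ext X
  simp only [Finpartition.mem_avoid, mem_erase]
  constructor
  · rintro ⟨X, hX, hXB, rfl⟩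
    have hne : X ≠ B := fun h ↦ hXB h.le
    rw [h_sdiff X hX hne]
    exact ⟨hne, hX⟩
  · rintro ⟨hne, hX⟩
    refine ⟨X, hX, fun hXB ↦ Q.ne_empty hX ?_, h_sdiff X hX hne⟩
    rw [← h_sdiff X hX hne]
    exact sdiff_eq_empty_iff_subset.2 hXB

/-- The partition of `insert y S` obtained from a partition `Q` of `S` by adding the point `y` to
the block `B`, or as a new singleton block if `B = ∅`. Writing `B ∩ S` makes the operation total in
`B`; only `B ∈ insert ∅ Q.parts` is meaningful. -/
def adjoinPoint (Q : Finpartition S) (hy : y ∉ S) (B : Finset α) : Finpartition (insert y S) :=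
  (Q.avoid B).extend (b := insert y (B ∩ S)) (insert_ne_empty _ _)
    (by rw [Finset.disjoint_left]; grind)
    (by ext; simp only [sup_eq_union]; grind)

theorem parts_adjoinPoint {Q : Finpartition S} (hy : y ∉ S) (hB : B ∈ insert ∅ Q.parts) :
    (adjoinPoint Q hy B).parts = insert (insert y B) (Q.parts.erase B) := by
  rw [adjoinPoint, Finpartition.extend_parts, parts_avoid_of_mem_insert_empty hB,
    inter_eq_left.2 (subset_of_mem_insert_empty_parts hB)]

theorem card_parts_adjoinPoint_empty (Q : Finpartition S) (hy : y ∉ S) :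
    #(adjoinPoint Q hy ∅).parts = #Q.parts + 1 := by
  rw [adjoinPoint, Finpartition.card_extend,
    parts_avoid_of_mem_insert_empty (mem_insert_self ∅ Q.parts),
    erase_eq_of_notMem Q.empty_notMem_parts]

theorem card_parts_adjoinPoint_of_mem {Q : Finpartition S} (hy : y ∉ S) (hB : B ∈ Q.parts) :
    #(adjoinPoint Q hy B).parts = #Q.parts := by
  rw [adjoinPoint, Finpartition.card_extend,
    parts_avoid_of_mem_insert_empty (mem_insert_of_mem hB), card_erase_add_one hB]

theorem part_adjoinPoint {Q : Finpartition S} (hy : y ∉ S) (hB : B ∈ insert ∅ Q.parts) :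
    (adjoinPoint Q hy B).part y = insert y B := by
  apply Finpartition.part_eq_of_mem
  · rw [parts_adjoinPoint hy hB]
    exact mem_insert_self _ _
  · exact mem_insert_self y B

theorem restrict_adjoinPoint {Q : Finpartition S} (hy : y ∉ S) (hB : B ∈ insert ∅ Q.parts) :
    (adjoinPoint Q hy B).restrict (subset_insert y S) = Q := by
  have h_new : insert y B ∩ S = B := by
    rw [insert_inter_of_notMem hy, inter_eq_left.2 (subset_of_mem_insert_empty_parts hB)]
  have h_old : (Q.parts.erase B).image (· ∩ S) = Q.parts.erase B := by
    rw [image_congr fun X hX ↦ inter_eq_left.2 (Q.subset (mem_of_mem_erase hX)), image_id']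
  ext1
  simp only [Finpartition.restrict, parts_adjoinPoint hy hB, image_insert, inf_eq_inter,
    bot_eq_empty, h_new, h_old]
  rcases mem_insert.1 hB with rfl | hB
  · rw [erase_insert_eq_erase, erase_idem, erase_eq_of_notMem Q.empty_notMem_parts]
  · rw [insert_erase hB, erase_eq_of_notMem Q.empty_notMem_parts]

theorem part_inter_eq_erase (P : Finpartition (insert y S)) (hy : y ∉ S) :
    P.part y ∩ S = (P.part y).erase y :=
  calc P.part y ∩ S = P.part y ∩ (insert y S).erase y := by rw [erase_insert hy]
    _ = (P.part y).erase y := by rw [inter_erase, inter_eq_left.2 (P.part_subset y)]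

theorem erase_part_mem_insert_empty_parts_restrict (P : Finpartition (insert y S)) (hy : y ∉ S) :
    (P.part y).erase y ∈ insert ∅ (P.restrict (subset_insert y S)).parts := by
  have h_part : P.part y ∈ P.parts := P.part_mem.2 (mem_insert_self y S)
  simp only [Finpartition.restrict, mem_insert, mem_erase, mem_image, inf_eq_inter, bot_eq_empty]
  exact or_iff_not_imp_left.2 fun h_ne ↦ ⟨h_ne, P.part y, h_part, part_inter_eq_erase P hy⟩

theorem parts_restrict_erase_erase_part (P : Finpartition (insert y S)) (hy : y ∉ S) :
    (P.restrict (subset_insert y S)).parts.erase ((P.part y).erase y) =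
      P.parts.erase (P.part y) := by
  have h_part : P.part y ∈ P.parts := P.part_mem.2 (mem_insert_self y S)
  have h_inter : ∀ X ∈ P.parts, X ≠ P.part y → X ∩ S = X := fun X hX hne ↦ by
    have hyX : y ∉ X := fun hyX ↦ hne (P.part_eq_of_mem hX hyX).symm
    exact inter_eq_left.2 ((subset_insert_iff_of_notMem hyX).1 (P.subset hX))
  have h_ne : ∀ X ∈ P.parts, X ≠ P.part y → X ≠ (P.part y).erase y := fun X hX hne h ↦ by
    have hX_subset : X ⊆ P.part y := h.trans_subset (erase_subset y _)
    exact hne (P.disjoint.eq_of_le hX h_part (P.ne_bot hX) hX_subset)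
  ext X
  simp only [Finpartition.restrict, mem_erase, mem_image, inf_eq_inter, bot_eq_empty]
  constructor
  · rintro ⟨hX_ne, -, X, hX, rfl⟩
    have hne : X ≠ P.part y := fun h ↦ hX_ne (h ▸ part_inter_eq_erase P hy)
    rw [h_inter X hX hne]
    exact ⟨hne, hX⟩
  · rintro ⟨hne, hX⟩
    exact ⟨h_ne X hX hne, P.ne_empty hX, X, hX, h_inter X hX hne⟩

theorem adjoinPoint_restrict (P : Finpartition (insert y S)) (hy : y ∉ S) :
    adjoinPoint (P.restrict (subset_insert y S)) hy ((P.part y).erase y) = P := by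
  ext1
  rw [parts_adjoinPoint hy (erase_part_mem_insert_empty_parts_restrict P hy),
    insert_erase (P.mem_part (mem_insert_self y S)), parts_restrict_erase_erase_part P hy,
    insert_erase (P.part_mem.2 (mem_insert_self y S))]

theorem sum_finpartition_insert {A : Type*} [AddCommMonoid A] (hy : y ∉ S)
    (f : Finpartition (insert y S) → A) :
    ∑ P, f P = ∑ Q : Finpartition S, ∑ B ∈ insert ∅ Q.parts, f (adjoinPoint Q hy B) := by
  rw [sum_sigma']
  symm
  refine sum_bij' (fun q _ ↦ adjoinPoint q.1 hy q.2)
    (fun P _ ↦ ⟨P.restrict (subset_insert y S), (P.part y).erase y⟩)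
    (fun _ _ ↦ mem_univ _) (fun P _ ↦ ?_) (fun ⟨Q, B⟩ hB ↦ ?_)
    (fun P _ ↦ adjoinPoint_restrict P hy) (fun _ _ ↦ rfl)
  · exact mem_sigma.2 ⟨mem_univ _, erase_part_mem_insert_empty_parts_restrict P hy⟩
  · replace hB : B ∈ insert ∅ Q.parts := (mem_sigma.1 hB).2
    have hyB : y ∉ B := notMem_mono (subset_of_mem_insert_empty_parts hB) hy
    simp only [restrict_adjoinPoint hy hB, part_adjoinPoint hy hB, erase_insert hyB]

theorem sum_cumulantCoeff_adjoinPoint (Q : Finpartition S) (hy : y ∉ S) (hS : S.Nonempty) :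
    ∑ B ∈ insert ∅ Q.parts, cumulantCoeff #(adjoinPoint Q hy B).parts = 0 := by
  have h_card : #Q.parts ≠ 0 := (card_pos.2 (Q.parts_nonempty hS.ne_empty)).ne'
  calc ∑ B ∈ insert ∅ Q.parts, cumulantCoeff #(adjoinPoint Q hy B).parts
      = cumulantCoeff (#Q.parts + 1) + ∑ _B ∈ Q.parts, cumulantCoeff #Q.parts := by
        rw [sum_insert Q.empty_notMem_parts, card_parts_adjoinPoint_empty]
        congr 1
        exact sum_congr rfl fun B hB ↦ by rw [card_parts_adjoinPoint_of_mem hy hB]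
    _ = cumulantCoeff (#Q.parts + 1) + #Q.parts * cumulantCoeff #Q.parts := by
        rw [sum_const, nsmul_eq_mul]
    _ = 0 := cumulantCoeff_succ_add_mul h_card

end AdjoinPoint

section SumOverPartitions

variable {α : Type*} [DecidableEq α] {Y Z : Finset α}

theorem sum_cumulantCoeff_of_ssubset (hZ : Z.Nonempty) (hZY : Z ⊂ Y) :
    ∑ P : Finpartition Y with ∃ X ∈ P.parts, Z ⊆ X, cumulantCoeff #P.parts = 0 := by
  obtain ⟨y, hyZ, hZ_insert⟩ := ssubset_iff.1 hZY
  obtain ⟨S, hyS, rfl⟩ : ∃ S, y ∉ S ∧ insert y S = Y :=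
    ⟨Y.erase y, notMem_erase y Y, insert_erase (hZ_insert (mem_insert_self y Z))⟩
  have hZS : Z ⊆ S := (subset_insert_iff_of_notMem hyZ).1 hZY.subset
  rw [sum_filter, sum_finpartition_insert hyS]
  refine sum_eq_zero fun Q _ ↦ ?_
  have h_block : ∀ B ∈ insert ∅ Q.parts,
      (∃ X ∈ (adjoinPoint Q hyS B).parts, Z ⊆ X) ↔ ∃ X ∈ Q.parts, Z ⊆ X := fun B hB ↦ by
    have h := exists_le_parts_restrict_iff (adjoinPoint Q hyS B) (subset_insert y S) hZ.ne_empty hZS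
    rwa [restrict_adjoinPoint hyS hB, iff_comm] at h
  rw [sum_congr rfl fun B hB ↦ if_congr (h_block B hB) rfl rfl]
  split_ifs
  · exact sum_cumulantCoeff_adjoinPoint Q hyS (hZ.mono hZS)
  · exact sum_const_zero

theorem sum_cumulantCoeff_of_self (hY : Y.Nonempty) :
    ∑ P : Finpartition Y with ∃ X ∈ P.parts, Y ⊆ X, cumulantCoeff #P.parts = 1 := by
  have h_filter : ({P | ∃ X ∈ P.parts, Y ⊆ X} : Finset (Finpartition Y)) =
      {Finpartition.indiscrete hY.ne_empty} := by
    ext P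
    simpa using exists_ge_parts_iff_eq_indiscrete hY.ne_empty P
  rw [h_filter, sum_singleton]
  simp [cumulantCoeff]

theorem sum_parts_sum_subsets {A : Type*} [AddCommMonoid A] (P : Finpartition Y)
    (f : Finset α → A) :
    ∑ X ∈ P.parts, ∑ Z ∈ X.powerset with Z ≠ ∅, f Z =
      ∑ Z ∈ Y.powerset with Z ≠ ∅, if ∃ X ∈ P.parts, Z ⊆ X then f Z else 0 := by
  rw [← sum_biUnion, ← sum_filter]
  · congr 1
    ext Z
    simp only [mem_biUnion, mem_filter, mem_powerset]
    constructor
    · rintro ⟨X, hX, hZX, hZ⟩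
      exact ⟨⟨hZX.trans (P.subset hX), hZ⟩, X, hX, hZX⟩
    · rintro ⟨⟨-, hZ⟩, X, hX, hZX⟩
      exact ⟨X, hX, hZX, hZ⟩
  · intro X hX X' hX' hXX'
    refine disjoint_left.2 fun Z hZ hZ' ↦ ?_
    simp only [mem_filter, mem_powerset] at hZ hZ'
    exact hZ.2 (disjoint_self.1 ((P.disjoint hX hX' hXX').mono hZ.1 hZ'.1))

theorem sum_smul_sum_parts_sum_subsets {R A : Type*} [Semiring R] [AddCommMonoid A] [Module R A]
    (c : Finpartition Y → R) (f : Finset α → A) :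
    ∑ P, c P • ∑ X ∈ P.parts, ∑ Z ∈ X.powerset with Z ≠ ∅, f Z =
      ∑ Z ∈ Y.powerset with Z ≠ ∅,
        (∑ P : Finpartition Y with ∃ X ∈ P.parts, Z ⊆ X, c P) • f Z := by
  simp only [sum_parts_sum_subsets, smul_sum, smul_ite, smul_zero, sum_smul]
  rw [sum_comm]
  exact sum_congr rfl fun Z _ ↦ (sum_filter _ _).symm

end SumOverPartitions

/-- **Core combinatorial identity of computation (13) of the paper.** For a finite set `Y`
with `|Y| ≥ 2` and elements `M(Z)` of an additive commutative group given for every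
nonempty `Z ⊆ Y`,
`∑_{P partition of Y} (−1)^{|P|−1}(|P|−1)! ∑_{X ∈ P} ∑_{∅ ≠ Z ⊆ X} M(Z) = M(Y)`. -/
theorem sum_partitions_signed_sum_interactions {α : Type*} [DecidableEq α]
    {G : Type*} [AddCommGroup G] (Y : Finset α) (hY : 2 ≤ Y.card) (M : Finset α → G) :
    ∑ P : Finpartition Y,
        ((-1 : ℤ) ^ (P.parts.card - 1) * (Nat.factorial (P.parts.card - 1) : ℤ)) •
          ∑ X ∈ P.parts, ∑ Z ∈ X.powerset.filter (fun Z => Z ≠ ∅), M Z =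
      M Y := by
  have hY_nonempty : Y.Nonempty := card_pos.1 (by lia)
  calc _ = ∑ Z ∈ Y.powerset with Z ≠ ∅,
          (∑ P : Finpartition Y with ∃ X ∈ P.parts, Z ⊆ X, cumulantCoeff #P.parts) • M Z :=
        sum_smul_sum_parts_sum_subsets (fun P ↦ cumulantCoeff #P.parts) M
    _ = (∑ P : Finpartition Y with ∃ X ∈ P.parts, Y ⊆ X, cumulantCoeff #P.parts) • M Y := by
        refine sum_eq_single_of_mem Y
          (mem_filter.2 ⟨mem_powerset_self Y, hY_nonempty.ne_empty⟩) fun Z hZ hZY ↦ ?_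
        obtain ⟨hZ_subset, hZ_ne⟩ := mem_filter.1 hZ
        rw [sum_cumulantCoeff_of_ssubset (nonempty_iff_ne_empty.2 hZ_ne)
          ((mem_powerset.1 hZ_subset).ssubset_of_ne hZY), zero_smul]
    _ = M Y := by rw [sum_cumulantCoeff_of_self hY_nonempty, one_smul]
end
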